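/- The time-update map h is nonexpansive for the natural (Fisher/affine-invariant) distance: for every invertible real n×n matrix A, every real n×n positive semidefinite symmetric matrix Q, and all real n×n positive definite symmetric matrices P₁, P₂, one has d(A P₁ Aᵀ + Q, A P₂ Aᵀ + Q) ≤ d(P₁, P₂). -/

import Mathlib

open Matrix

noncomputable def matEigs {n : ℕ} (M : Matrix (Fin n) (Fin n) ℝ) : Fin n → ℝ := by
  classical exact if h : M.IsHermitian then h.eigenvalues else 0

/-- The positive semidefinite square root of a positive semidefinite matrix
(removed from Mathlib; restated here, over `ℝ`, with its old definition). -/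
noncomputable def Matrix.PosSemidef.sqrt {n : Type*} [Fintype n] [DecidableEq n]
    {A : Matrix n n ℝ} (hA : A.PosSemidef) : Matrix n n ℝ :=
  hA.1.eigenvectorUnitary.1 * diagonal (Real.sqrt ∘ hA.1.eigenvalues) *
    (star hA.1.eigenvectorUnitary : Matrix n n ℝ)

noncomputable def matSqrt {n : ℕ} (M : Matrix (Fin n) (Fin n) ℝ) :
    Matrix (Fin n) (Fin n) ℝ := by
  classical exact if h : M.PosSemidef then h.sqrt else 0

/-- The natural (Fisher / affine-invariant) distance on positive definite
matrices: `d(P₁,P₂) = (∑ᵢ (log λᵢ)²)^{1/2}` where `λᵢ` are the eigenvalues of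
`P₂^{-1/2} P₁ P₂^{-1/2}`. -/
noncomputable def natDist {n : ℕ} (P₁ P₂ : Matrix (Fin n) (Fin n) ℝ) : ℝ :=
  Real.sqrt (∑ i : Fin n,
    Real.log (matEigs ((matSqrt P₂)⁻¹ * P₁ * (matSqrt P₂)⁻¹) i) ^ 2)

/-!
The squares summed in `natDist P₁ P₂` are `(log λₖ)²`, where the `λₖ` are the critical values of the
generalized Rayleigh quotient `xᵀP₁x / xᵀP₂x`. At a vector `z` the quotient of the updated pair is

  `(xᵀP₁x + zᵀQz) / (xᵀP₂x + zᵀQz)` with `x = Aᵀz`,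

a mediant of the old quotient at `x` and `1`, so it lies between them. A Courant–Fischer dimension
count carries this over to the sorted eigenvalues: each new `λₖ` lies between `1` and the old one,
and therefore `|log λₖ|` does not increase.
-/

lemma abs_log_le_abs_log_of_mem_uIcc_one {x y : ℝ} (hx : 0 < x) (hy : y ∈ Set.uIcc 1 x) :
    |Real.log y| ≤ |Real.log x| := by
  have hmono : MonotoneOn Real.log (Set.uIcc 1 x) :=
    Real.strictMonoOn_log.monotoneOn.mono fun t ht => (lt_min one_pos hx).trans_le ht.1
  simpa only [Real.log_one, sub_zero] using Set.abs_sub_left_of_mem_uIcc (hmono.mapsTo_uIcc hy)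

lemma star_dotProduct_conjTranspose_mul_mul_mulVec {m n α : Type*} [Fintype m] [Fintype n]
    [Semiring α] [StarRing α] (B : Matrix m n α) (M : Matrix m m α) (x : n → α) :
    star x ⬝ᵥ ((Bᴴ * M * B) *ᵥ x) = star (B *ᵥ x) ⬝ᵥ (M *ᵥ (B *ᵥ x)) := by
  rw [star_mulVec, ← dotProduct_mulVec, mulVec_mulVec, mulVec_mulVec, Matrix.mul_assoc]

lemma exists_ne_zero_mulVec_apply_eq_zero {ι R : Type*} [Fintype ι] [CommRing R] [IsDomain R]
    (G H : Matrix ι ι R) {s t : Set ι} (hst : Disjoint s t) {k : ι} (hs : k ∉ s) (ht : k ∉ t) :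
    ∃ z ≠ 0, (∀ j ∈ s, (G *ᵥ z) j = 0) ∧ ∀ j ∈ t, (H *ᵥ z) j = 0 := by
  classical
  let K : Matrix ι ι R := fun j => if j ∈ s then G j else if j ∈ t then H j else 0
  have hdet : K.det = 0 := det_eq_zero_of_row_eq_zero k fun j => by simp [K, hs, ht]
  obtain ⟨z, hz, hKz⟩ := exists_mulVec_eq_zero_iff.mpr hdet
  refine ⟨z, hz, fun j hj => ?_, fun j hj => ?_⟩
  · simpa [K, mulVec, hj] using congrFun hKz j
  · simpa [K, mulVec, hj, hst.notMem_of_mem_right hj] using congrFun hKz j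

section Eigenvalues

variable {ι 𝕜 : Type*} [Fintype ι] [DecidableEq ι] [RCLike 𝕜] {M N : Matrix ι ι 𝕜}

lemma re_star_dotProduct_mulVec_eq_sum_eigenvalues (hM : M.IsHermitian) (x : ι → 𝕜) :
    RCLike.re (star x ⬝ᵥ (M *ᵥ x)) =
      ∑ j, hM.eigenvalues j * ‖((hM.eigenvectorUnitary : Matrix ι ι 𝕜)ᴴ *ᵥ x) j‖ ^ 2 := by
  set U := (hM.eigenvectorUnitary : Matrix ι ι 𝕜)
  have hdiag : M = Uᴴᴴ * diagonal (RCLike.ofReal ∘ hM.eigenvalues) * Uᴴ := by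
    rw [conjTranspose_conjTranspose]
    exact hM.spectral_theorem
  conv_lhs => rw [hdiag]
  rw [star_dotProduct_conjTranspose_mul_mul_mulVec]
  simp only [dotProduct, mulVec_diagonal, Pi.star_apply, Function.comp_apply, map_sum]
  refine Finset.sum_congr rfl fun j _ => ?_
  rw [mul_left_comm, RCLike.star_def, RCLike.conj_mul, RCLike.re_ofReal_mul]
  norm_cast

lemma re_star_dotProduct_self_eq_sum (U : unitaryGroup ι 𝕜) (x : ι → 𝕜) :
    RCLike.re (star x ⬝ᵥ x) = ∑ j, ‖((U : Matrix ι ι 𝕜)ᴴ *ᵥ x) j‖ ^ 2 := by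
  have hU : (U : Matrix ι ι 𝕜)ᴴᴴ * 1 * (U : Matrix ι ι 𝕜)ᴴ = 1 := by
    rw [Matrix.mul_one, conjTranspose_conjTranspose]
    exact Unitary.coe_mul_star_self U
  have hx := star_dotProduct_conjTranspose_mul_mul_mulVec (U : Matrix ι ι 𝕜)ᴴ 1 x
  rw [hU, one_mulVec, one_mulVec] at hx
  rw [hx]
  simp only [dotProduct, Pi.star_apply, map_sum, RCLike.star_def, RCLike.conj_mul]
  norm_cast

lemma mul_re_star_dotProduct_self_le (hM : M.IsHermitian) {c : ℝ} {x : ι → 𝕜}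
    (hx : ∀ j, hM.eigenvalues j < c →
      ((hM.eigenvectorUnitary : Matrix ι ι 𝕜)ᴴ *ᵥ x) j = 0) :
    c * RCLike.re (star x ⬝ᵥ x) ≤ RCLike.re (star x ⬝ᵥ (M *ᵥ x)) := by
  rw [re_star_dotProduct_self_eq_sum hM.eigenvectorUnitary,
    re_star_dotProduct_mulVec_eq_sum_eigenvalues hM, Finset.mul_sum]
  refine Finset.sum_le_sum fun j _ => ?_
  rcases lt_or_ge (hM.eigenvalues j) c with hj | hj
  · simp [hx j hj]
  · gcongr

lemma le_mul_re_star_dotProduct_self (hM : M.IsHermitian) {c : ℝ} {x : ι → 𝕜}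
    (hx : ∀ j, c < hM.eigenvalues j →
      ((hM.eigenvectorUnitary : Matrix ι ι 𝕜)ᴴ *ᵥ x) j = 0) :
    RCLike.re (star x ⬝ᵥ (M *ᵥ x)) ≤ c * RCLike.re (star x ⬝ᵥ x) := by
  rw [re_star_dotProduct_self_eq_sum hM.eigenvectorUnitary,
    re_star_dotProduct_mulVec_eq_sum_eigenvalues hM, Finset.mul_sum]
  refine Finset.sum_le_sum fun j _ => ?_
  rcases lt_or_ge c (hM.eigenvalues j) with hj | hj
  · simp [hx j hj]
  · gcongr

-- Over an abstract index type the eigenvalues are not sorted in any intrinsic order, but all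
-- Hermitian matrices share the same enumeration by decreasing eigenvalue.
lemma eigenvalues_monovary (hM : M.IsHermitian) (hN : N.IsHermitian) :
    Monovary hM.eigenvalues hN.eigenvalues := fun _ _ hlt =>
  hM.eigenvalues₀_antitone (hN.eigenvalues₀_antitone.reflect_lt hlt).le

lemma exists_ne_zero_eigenvalues_mul_le (hM : M.IsHermitian) (hN : N.IsHermitian)
    (B C : Matrix ι ι 𝕜) (k : ι) :
    ∃ z ≠ 0,
      hM.eigenvalues k * RCLike.re (star (B *ᵥ z) ⬝ᵥ (B *ᵥ z)) ≤
        RCLike.re (star (B *ᵥ z) ⬝ᵥ (M *ᵥ (B *ᵥ z))) ∧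
      RCLike.re (star (C *ᵥ z) ⬝ᵥ (N *ᵥ (C *ᵥ z))) ≤
        hN.eigenvalues k * RCLike.re (star (C *ᵥ z) ⬝ᵥ (C *ᵥ z)) := by
  have hdisj : Disjoint {j | hM.eigenvalues j < hM.eigenvalues k}
      {j | hN.eigenvalues k < hN.eigenvalues j} :=
    Set.disjoint_left.mpr fun j hj hj' => (eigenvalues_monovary hM hN hj').not_gt hj
  obtain ⟨z, hz, hMz, hNz⟩ := exists_ne_zero_mulVec_apply_eq_zero
    ((hM.eigenvectorUnitary : Matrix ι ι 𝕜)ᴴ * B) ((hN.eigenvectorUnitary : Matrix ι ι 𝕜)ᴴ * C)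
    hdisj (lt_irrefl (hM.eigenvalues k)) (lt_irrefl (hN.eigenvalues k))
  simp only [← mulVec_mulVec] at hMz hNz
  exact ⟨z, hz, mul_re_star_dotProduct_self_le hM hMz, le_mul_re_star_dotProduct_self hN hNz⟩

end Eigenvalues

section MatSqrt

variable {n : ℕ} {P : Matrix (Fin n) (Fin n) ℝ}

open scoped MatrixOrder

lemma matSqrt_eq_cfc_sqrt (hP : P.PosSemidef) : matSqrt P = CFC.sqrt P := by
  rw [CFC.sqrt_eq_real_sqrt P hP.nonneg, cfcₙ_eq_cfc, hP.isHermitian.cfc_eq]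
  simp only [matSqrt, hP, dif_pos]
  rfl

lemma isHermitian_matSqrt (hP : P.PosSemidef) : (matSqrt P).IsHermitian :=
  matSqrt_eq_cfc_sqrt hP ▸ (CFC.sqrt_nonneg P).posSemidef.isHermitian

lemma matSqrt_mul_self (hP : P.PosSemidef) : matSqrt P * matSqrt P = P := by
  rw [matSqrt_eq_cfc_sqrt hP, CFC.sqrt_mul_sqrt_self P hP.nonneg]

lemma isUnit_matSqrt (hP : P.PosDef) : IsUnit (matSqrt P) := by
  rw [matSqrt_eq_cfc_sqrt hP.posSemidef, CFC.isUnit_sqrt_iff P hP.posSemidef.nonneg]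
  exact hP.isUnit

end MatSqrt

section RelativeEigenvalues

variable {n : ℕ} {P R P' R' : Matrix (Fin n) (Fin n) ℝ}

/-- The matrix `R^{-1/2} P R^{-1/2}`, representing `P` in coordinates in which `R` becomes the
identity. -/
noncomputable def whiten (P R : Matrix (Fin n) (Fin n) ℝ) : Matrix (Fin n) (Fin n) ℝ :=
  (matSqrt R)⁻¹ * P * (matSqrt R)⁻¹

/-- The eigenvalues of `P` relative to `R`, i.e. the roots `t` of `det (P - t R)` when `R` is
positive definite; they are the `λᵢ` in the definition of `natDist`. -/
noncomputable def relEigs (P R : Matrix (Fin n) (Fin n) ℝ) : Fin n → ℝ :=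
  matEigs (whiten P R)

lemma relEigs_eq_eigenvalues (h : (whiten P R).IsHermitian) : relEigs P R = h.eigenvalues :=
  dif_pos h

lemma isHermitian_whiten (hP : P.IsHermitian) (hR : R.PosSemidef) : (whiten P R).IsHermitian := by
  simpa only [whiten, (isHermitian_matSqrt hR).inv.eq] using
    isHermitian_conjTranspose_mul_mul (matSqrt R)⁻¹ hP

lemma posDef_whiten (hP : P.PosDef) (hR : R.PosDef) : (whiten P R).PosDef := by
  have hS : IsUnit (matSqrt R)⁻¹ := isUnit_nonsing_inv_iff.mpr (isUnit_matSqrt hR)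
  simpa only [whiten, (isHermitian_matSqrt hR.posSemidef).inv.eq] using
    hP.conjTranspose_mul_mul_same (mulVec_injective_of_isUnit hS)

lemma relEigs_pos (hP : P.PosDef) (hR : R.PosDef) (k : Fin n) : 0 < relEigs P R k := by
  have hW := posDef_whiten hP hR
  rw [relEigs_eq_eigenvalues hW.isHermitian]
  exact hW.eigenvalues_pos k

lemma matSqrt_mul_whiten_mul_matSqrt (hR : R.PosDef) :
    matSqrt R * whiten P R * matSqrt R = P := by
  have hS := (isUnit_iff_isUnit_det _).mp (isUnit_matSqrt hR)
  simp only [whiten, Matrix.mul_assoc, nonsing_inv_mul _ hS, Matrix.mul_one,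
    mul_nonsing_inv_cancel_left _ _ hS]

lemma dotProduct_whiten_mulVec (hR : R.PosDef) (x : Fin n → ℝ) :
    (matSqrt R *ᵥ x) ⬝ᵥ (whiten P R *ᵥ (matSqrt R *ᵥ x)) = x ⬝ᵥ (P *ᵥ x) := by
  have h := star_dotProduct_conjTranspose_mul_mul_mulVec (matSqrt R) (whiten P R) x
  rw [(isHermitian_matSqrt hR.posSemidef).eq, matSqrt_mul_whiten_mul_matSqrt hR] at h
  simpa only [star_trivial] using h.symm

lemma dotProduct_matSqrt_mulVec_self (hR : R.PosSemidef) (x : Fin n → ℝ) :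
    (matSqrt R *ᵥ x) ⬝ᵥ (matSqrt R *ᵥ x) = x ⬝ᵥ (R *ᵥ x) := by
  have h := star_dotProduct_conjTranspose_mul_mul_mulVec (matSqrt R) 1 x
  rw [(isHermitian_matSqrt hR).eq, Matrix.mul_one, matSqrt_mul_self hR, one_mulVec] at h
  simpa only [star_trivial] using h.symm

lemma exists_ne_zero_relEigs_mul_le (hP : P.IsHermitian) (hR : R.PosDef) (hP' : P'.IsHermitian)
    (hR' : R'.PosDef) (B C : Matrix (Fin n) (Fin n) ℝ) (k : Fin n) :
    ∃ z ≠ 0,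
      relEigs P R k * ((B *ᵥ z) ⬝ᵥ (R *ᵥ (B *ᵥ z))) ≤ (B *ᵥ z) ⬝ᵥ (P *ᵥ (B *ᵥ z)) ∧
      (C *ᵥ z) ⬝ᵥ (P' *ᵥ (C *ᵥ z)) ≤ relEigs P' R' k * ((C *ᵥ z) ⬝ᵥ (R' *ᵥ (C *ᵥ z))) := by
  have hW := isHermitian_whiten hP hR.posSemidef
  have hW' := isHermitian_whiten hP' hR'.posSemidef
  obtain ⟨z, hz, hle, hge⟩ :=
    exists_ne_zero_eigenvalues_mul_le hW hW' (matSqrt R * B) (matSqrt R' * C) k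
  simp only [← mulVec_mulVec, star_trivial, RCLike.re_to_real, dotProduct_whiten_mulVec hR,
    dotProduct_whiten_mulVec hR', dotProduct_matSqrt_mulVec_self hR.posSemidef,
    dotProduct_matSqrt_mulVec_self hR'.posSemidef, ← relEigs_eq_eigenvalues] at hle hge
  exact ⟨z, hz, hle, hge⟩

end RelativeEigenvalues

/-- The time-update (covariance prediction) map `h(P) = A P Aᵀ + Q` of the Riccati recursion. -/
def riccatiH {m n α : Type*} [Fintype n] [CommSemiring α] (A : Matrix m n α) (Q : Matrix m m α)
    (P : Matrix n n α) : Matrix m m α :=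
  A * P * Aᵀ + Q

lemma dotProduct_riccatiH_mulVec {m n α : Type*} [Fintype m] [Fintype n] [CommSemiring α]
    (A : Matrix m n α) (Q : Matrix m m α) (P : Matrix n n α) (z : m → α) :
    z ⬝ᵥ (riccatiH A Q P *ᵥ z) = (Aᵀ *ᵥ z) ⬝ᵥ (P *ᵥ (Aᵀ *ᵥ z)) + z ⬝ᵥ (Q *ᵥ z) := by
  rw [riccatiH, add_mulVec, dotProduct_add, ← mulVec_mulVec, ← mulVec_mulVec, dotProduct_mulVec,
    ← mulVec_transpose]

lemma isHermitian_riccatiH {m n : Type*} [Fintype n] (A : Matrix m n ℝ) {Q : Matrix m m ℝ}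
    {P : Matrix n n ℝ} (hQ : Q.IsHermitian) (hP : P.IsHermitian) :
    (riccatiH A Q P).IsHermitian :=
  (isHermitian_mul_mul_conjTranspose A hP).add hQ

lemma posDef_riccatiH {m n : Type*} [Fintype m] [Fintype n] {A : Matrix m n ℝ} {Q : Matrix m m ℝ}
    {P : Matrix n n ℝ} (hA : Function.Injective A.vecMul) (hQ : Q.PosSemidef) (hP : P.PosDef) :
    (riccatiH A Q P).PosDef :=
  (hP.mul_mul_conjTranspose_same hA).add_posSemidef hQ

section Contraction

variable {n : ℕ} {A Q P₁ P₂ : Matrix (Fin n) (Fin n) ℝ}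

lemma min_one_relEigs_le_relEigs_riccatiH (hQ : Q.PosSemidef) (h₁ : P₁.IsHermitian)
    (h₂ : P₂.PosDef) (hR : (riccatiH A Q P₂).PosDef) (k : Fin n) :
    min 1 (relEigs P₁ P₂ k) ≤ relEigs (riccatiH A Q P₁) (riccatiH A Q P₂) k := by
  obtain ⟨z, hz, hle, hge⟩ := exists_ne_zero_relEigs_mul_le h₁ h₂
    (isHermitian_riccatiH A hQ.isHermitian h₁) hR Aᵀ 1 k
  have hpos := hR.dotProduct_mulVec_pos hz
  have hP₂z := h₂.posSemidef.dotProduct_mulVec_nonneg (Aᵀ *ᵥ z)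
  have hQz := hQ.dotProduct_mulVec_nonneg z
  simp only [star_trivial, one_mulVec, dotProduct_riccatiH_mulVec] at hpos hP₂z hQz hge
  have hleP₂ := mul_le_mul_of_nonneg_right (min_le_right 1 (relEigs P₁ P₂ k)) hP₂z
  have hleQ := mul_le_mul_of_nonneg_right (min_le_left 1 (relEigs P₁ P₂ k)) hQz
  refine le_of_mul_le_mul_right ?_ hpos
  linarith

lemma relEigs_riccatiH_le_max_one_relEigs (hQ : Q.PosSemidef) (h₁ : P₁.IsHermitian)
    (h₂ : P₂.PosDef) (hR : (riccatiH A Q P₂).PosDef) (k : Fin n) :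
    relEigs (riccatiH A Q P₁) (riccatiH A Q P₂) k ≤ max 1 (relEigs P₁ P₂ k) := by
  obtain ⟨z, hz, hle, hge⟩ := exists_ne_zero_relEigs_mul_le
    (isHermitian_riccatiH A hQ.isHermitian h₁) hR h₁ h₂ 1 Aᵀ k
  have hpos := hR.dotProduct_mulVec_pos hz
  have hP₂z := h₂.posSemidef.dotProduct_mulVec_nonneg (Aᵀ *ᵥ z)
  have hQz := hQ.dotProduct_mulVec_nonneg z
  simp only [star_trivial, one_mulVec, dotProduct_riccatiH_mulVec] at hpos hP₂z hQz hle
  have hleP₂ := mul_le_mul_of_nonneg_right (le_max_right 1 (relEigs P₁ P₂ k)) hP₂z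
  have hleQ := mul_le_mul_of_nonneg_right (le_max_left 1 (relEigs P₁ P₂ k)) hQz
  refine le_of_mul_le_mul_right ?_ hpos
  linarith

lemma relEigs_riccatiH_mem_uIcc (hQ : Q.PosSemidef) (h₁ : P₁.IsHermitian) (h₂ : P₂.PosDef)
    (hR : (riccatiH A Q P₂).PosDef) (k : Fin n) :
    relEigs (riccatiH A Q P₁) (riccatiH A Q P₂) k ∈ Set.uIcc 1 (relEigs P₁ P₂ k) :=
  ⟨min_one_relEigs_le_relEigs_riccatiH hQ h₁ h₂ hR k,
    relEigs_riccatiH_le_max_one_relEigs hQ h₁ h₂ hR k⟩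

end Contraction

theorem riccatiH_nonexpansive_general {n : ℕ} {A Q P₁ P₂ : Matrix (Fin n) (Fin n) ℝ}
    (hQ : Q.PosSemidef) (h₁ : P₁.PosDef) (h₂ : P₂.PosDef) (hR : (riccatiH A Q P₂).PosDef) :
    natDist (riccatiH A Q P₁) (riccatiH A Q P₂) ≤ natDist P₁ P₂ := by
  refine Real.sqrt_le_sqrt (Finset.sum_le_sum fun k _ => sq_le_sq.mpr ?_)
  exact abs_log_le_abs_log_of_mem_uIcc_one (relEigs_pos h₁ h₂ k)
    (relEigs_riccatiH_mem_uIcc hQ h₁.isHermitian h₂ hR k)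

/-- The time-update map `h(P) = A P Aᵀ + Q` is nonexpansive
for the natural (Fisher / affine-invariant) distance. -/
theorem riccatiH_nonexpansive
    {n : ℕ} (A Q : Matrix (Fin n) (Fin n) ℝ)
    (hA : IsUnit A.det) (hQ : Q.PosSemidef)
    (P₁ P₂ : Matrix (Fin n) (Fin n) ℝ) (h₁ : P₁.PosDef) (h₂ : P₂.PosDef) :
    natDist (A * P₁ * Aᵀ + Q) (A * P₂ * Aᵀ + Q) ≤ natDist P₁ P₂ :=
  riccatiH_nonexpansive_general hQ h₁ h₂
    (posDef_riccatiH (vecMul_injective_of_isUnit ((isUnit_iff_isUnit_det A).mpr hA)) hQ h₂)
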